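/- Let X, Y, Z be integral schemes of finite type over a Noetherian scheme, with Z separated. Let f : X → Y be a proper morphism such that the natural map 𝒪_Y → f_*𝒪_X is an isomorphism, and let g : X → Z be a morphism such that, for some point y ∈ Y, the image g(f⁻¹(y)) consists of a single point of Z. Then there exists an open neighborhood U of y in Y and a morphism h : U → Z such that the restriction of g to f⁻¹(U) equals h composed with the restriction of f. -/

import Mathlib

open AlgebraicGeometry CategoryTheory

/-- A morphism to an affine scheme factors through any morphism inducing an isomorphism on global
sections. -/
theorem exists_comp_eq_of_isAffine {X Y Z : Scheme} [IsAffine Z] (f : X ⟶ Y) [IsIso f.appTop]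
    (g : X ⟶ Z) : ∃ h : Y ⟶ Z, f ≫ h = g := by
  refine ⟨Y.toSpecΓ ≫ Spec.map (g.appTop ≫ inv f.appTop) ≫ Z.isoSpec.inv, ?_⟩
  rw [← Category.assoc, ← Category.assoc, Iso.comp_inv_eq, Scheme.toSpecΓ_naturality,
    Category.assoc, ← Spec.map_comp, Category.assoc, IsIso.inv_hom_id, Category.comp_id,
    ← Scheme.toSpecΓ_naturality]
  rfl

/-- **Rigidity Lemma, local form.** Let `X, Y, Z` be integral schemes of finite type over a
Noetherian scheme `S`, with `Z` separated (over `S`). Let `f : X ⟶ Y` be a proper morphism such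
that the natural map `𝒪_Y → f_* 𝒪_X` is an isomorphism (i.e. `f.app U` is an isomorphism for
every open `U ⊆ Y`), and let `g : X ⟶ Z` be a morphism such that the image `g(f⁻¹(y))` is a
single point for some `y ∈ Y`. Then there is an open neighbourhood `U` of `y` and a morphism
`h : U ⟶ Z` with `g` restricted to `f⁻¹(U)` equal to `h` composed with the restriction of `f`. -/
theorem rigidity_lemma_local
    (S X Y Z : Scheme) [AlgebraicGeometry.IsNoetherian S]
    [IsIntegral X] [IsIntegral Y] [IsIntegral Z]
    (sX : X ⟶ S) (sY : Y ⟶ S) (sZ : Z ⟶ S)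
    [LocallyOfFiniteType sX] [QuasiCompact sX]
    [LocallyOfFiniteType sY] [QuasiCompact sY]
    [LocallyOfFiniteType sZ] [QuasiCompact sZ]
    [IsSeparated sZ]
    (f : X ⟶ Y) [IsProper f] (hfS : f ≫ sY = sX)
    (hO : ∀ U : Y.Opens, IsIso (f.app U))
    (g : X ⟶ Z) (hgS : g ≫ sZ = sX)
    (y : Y) (hy : ∃ z : Z, g.base '' (f.base ⁻¹' {y}) = {z}) :
    ∃ U : Y.Opens, y ∈ U ∧ ∃ h : (U : Scheme) ⟶ Z,
      (f ⁻¹ᵁ U).ι ≫ g = (f ∣_ U) ≫ h := by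
  obtain ⟨z, hz⟩ := hy
  obtain ⟨V, hV, hzV, -⟩ := exists_isAffineOpen_mem_and_subset (x := z) (U := ⊤) trivial
  have hfib : f.base ⁻¹' {y} ⊆ (g ⁻¹ᵁ V : Set X) := by
    intro x hx
    have hgx : g.base x ∈ ({z} : Set Z) := hz ▸ Set.mem_image_of_mem _ hx
    rw [Set.mem_singleton_iff] at hgx
    change g.base x ∈ V
    rwa [hgx]
  let U : Y.Opens := ⟨(f '' (g ⁻¹ᵁ V : Set X)ᶜ)ᶜ,
    (f.isClosedMap _ (g ⁻¹ᵁ V).isOpen.isClosed_compl).isOpen_compl⟩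
  have hUV : f ⁻¹ᵁ U ≤ g ⁻¹ᵁ V := fun x hx => by
    by_contra hxV
    exact hx ⟨x, hxV, rfl⟩
  refine ⟨U, fun ⟨x, hxV, hxy⟩ => hxV (hfib hxy), ?_⟩
  have : IsAffine V := hV
  have : IsIso (f ∣_ U).appTop := by
    rw [Scheme.Hom.appTop, morphismRestrict_app]
    exact IsIso.comp_isIso' (hO _) (Functor.map_isIso _ _)
  have hrange : Set.range ((f ⁻¹ᵁ U).ι ≫ g) ⊆ Set.range V.ι := by
    rintro _ ⟨x, rfl⟩
    rw [Scheme.Opens.range_ι]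
    exact hUV x.2
  obtain ⟨h, hh⟩ := exists_comp_eq_of_isAffine (f ∣_ U)
    (IsOpenImmersion.lift V.ι ((f ⁻¹ᵁ U).ι ≫ g) hrange)
  exact ⟨h ≫ V.ι, by rw [← Category.assoc, hh, IsOpenImmersion.lift_fac]⟩
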